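/- arXiv:2311.13823 — 2 statements merged into one kernel-verified Lean document; each statement's English description precedes it below -/
import Mathlib

section
/- For every integer m ≥ 0, β_{6m+4} = β_{3m+2}. Consequently, if 𝐔_β contains a sequence of smallest period 3m+2, then it contains one of smallest period 6m+4 for every β strictly above the common critical base. -/
open Filter Set

noncomputable section

namespace FatSierpinski

/-- The digit set Ω = {(0,0),(1,0),(0,1)} ⊆ ℝ². -/
def OmegaR : Set (ℝ × ℝ) := {(0, 0), (1, 0), (0, 1)}

/-- The fat Sierpinski gasket `S_β` (sequences are 0-indexed: `d i` is the digit d_{i+1}). -/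
def Sfat (β : ℝ) : Set (ℝ × ℝ) :=
  {x | ∃ d : ℕ → ℝ × ℝ, (∀ i, d i ∈ OmegaR) ∧ x = ∑' i : ℕ, (β ^ (i + 1))⁻¹ • d i}

/-- The convex hull `Δ_β` of `S_β`. -/
def Delta (β : ℝ) : Set (ℝ × ℝ) := convexHull ℝ (Sfat β)

/-- The map `f_d(x) = (x + d)/β`. -/
def fmap (β : ℝ) (d : ℝ × ℝ) (x : ℝ × ℝ) : ℝ × ℝ := β⁻¹ • (x + d)

/-- The overlap region `O_β = ⋃_{c ≠ d ∈ Ω} f_c(Δ_β) ∩ f_d(Δ_β)`. -/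
def Ofat (β : ℝ) : Set (ℝ × ℝ) :=
  ⋃ c ∈ OmegaR, ⋃ d ∈ OmegaR, ⋃ (_ : c ≠ d), (fmap β c '' Delta β) ∩ (fmap β d '' Delta β)

/-- The univoque set of codings `𝐔_β`. -/
def Ufat (β : ℝ) : Set (ℕ → ℝ × ℝ) :=
  {d | (∀ i, d i ∈ OmegaR) ∧
    ∀ n : ℕ, (∑' i : ℕ, (β ^ (i + 1))⁻¹ • d (n + i)) ∉ Ofat β}

/-- `d` has smallest period `k`. -/
def SmallestPeriod {α : Type*} (d : ℕ → α) (k : ℕ) : Prop :=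
  0 < k ∧ (∀ i, d (i + k) = d i) ∧ ∀ j, 0 < j → j < k → ∃ i, d (i + j) ≠ d i

/-- The critical base `β_k`. -/
def betaK (k : ℕ) : ℝ :=
  sInf {β : ℝ | β ∈ Set.Ioc (1 : ℝ) 2 ∧ ∃ d ∈ Ufat β, SmallestPeriod d k}

/-- Strict lexicographic order on sequences. -/
def seqLT {α : Type*} [Preorder α] (a b : ℕ → α) : Prop :=
  ∃ n, (∀ i < n, a i = b i) ∧ a n < b n

/-- Weak lexicographic order on sequences. -/
def seqLE {α : Type*} [Preorder α] (a b : ℕ → α) : Prop :=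
  seqLT a b ∨ a = b

/-- `a` is a 0-1 sequence. -/
def IsBinary (a : ℕ → ℕ) : Prop := ∀ i, a i ≤ 1

/-- `a` does not end with `0^∞`. -/
def NotEndInZeros (a : ℕ → ℕ) : Prop := ∀ N, ∃ i, N ≤ i ∧ a i ≠ 0

/-- `∑_{i=1}^∞ a_i β^{-i} = 1` (0-indexed: `a i` is a_{i+1}). -/
def SumsToOne (β : ℝ) (a : ℕ → ℕ) : Prop :=
  ∑' i : ℕ, (a i : ℝ) / β ^ (i + 1) = 1

/-- `a` is the quasi-greedy β-expansion of 1: the lexicographically largest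
binary sequence not ending in `0^∞` whose value in base β is 1. -/
def IsQuasiGreedy (β : ℝ) (a : ℕ → ℕ) : Prop :=
  IsBinary a ∧ NotEndInZeros a ∧ SumsToOne β a ∧
    ∀ b : ℕ → ℕ, IsBinary b → NotEndInZeros b → SumsToOne β b → seqLE b a

/-- `w⁺`: replace the final digit 0 of a block by 1. -/
def plusBlock (w : List ℕ) : List ℕ := w.dropLast ++ [1]

/-- `Θ` flips the outer digits of every consecutive triple
(000↦101, 001↦100, 100↦001, 101↦000). -/
def thetaBlock (w : List ℕ) : List ℕ :=
  w.mapIdx fun i x => if i % 3 = 1 then x else 1 - x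

/-- `tB n` is the block `t_{n+1}`: `t_1 = 100`, `t_{n+1} = t_n⁺ Θ(t_n⁺)`. -/
def tB : ℕ → List ℕ
  | 0 => [1, 0, 0]
  | n + 1 => plusBlock (tB n) ++ thetaBlock (plusBlock (tB n))

/-- The sequence `u w^∞` (the block `u` followed by `w` repeated forever). -/
def prefixPeriodic (u w : List ℕ) : ℕ → ℕ := fun i =>
  if i < u.length then u.getD i 0 else w.getD ((i - u.length) % w.length) 0

/-- The periodic sequence `w^∞`. -/
def periodicSeq (w : List ℕ) : ℕ → ℕ := fun i => w.getD (i % w.length) 0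

/-- The componentwise limit `λ = 101001000101…` of the blocks `t_n`
(the digit `λ_{i+1}` has stabilized in `t_{i+2} = tB (i+1)`). -/
def lamSeq : ℕ → ℕ := fun i => (tB (i + 1)).getD i 0

/-- `β_c` is the unique base in (1,2] with `∑ λ_i β^{-i} = 1`. -/
def IsBetaC (β : ℝ) : Prop := β ∈ Set.Ioc (1 : ℝ) 2 ∧ SumsToOne β lamSeq

/-- The sequence `t_{n+2}⁺ (Θ(t_{n+2}))^∞`, the quasi-greedy expansion of 1 for `β̂_n`. -/
def hatSeq (n : ℕ) : ℕ → ℕ :=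
  prefixPeriodic (plusBlock (tB (n + 1))) (thetaBlock (tB (n + 1)))

/-- The Sharkovskii ordering `k ⊳ ℓ` on positive integers. -/
def Sharkovskii (k l : ℕ) : Prop :=
  ∃ a b c d : ℕ, k = 2 ^ a * (2 * b + 1) ∧ l = 2 ^ c * (2 * d + 1) ∧ k ≠ l ∧
    ((1 ≤ b ∧ d = 0) ∨ (1 ≤ b ∧ 1 ≤ d ∧ (a < c ∨ (a = c ∧ b < d))) ∨
      (b = 0 ∧ d = 0 ∧ c < a))

/-- The digit set Ω as pairs of naturals (for combinatorial statements). -/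
def OmegaD : Set (ℕ × ℕ) := {(0, 0), (1, 0), (0, 1)}

/-- The periodic extension `(d_1 … d_k)^∞` of a block. -/
def cyc (d : List (ℕ × ℕ)) : ℕ → ℕ × ℕ := fun i => d.getD (i % d.length) (0, 0)

/-- Strict lexicographic order on lists. -/
def listLT (u v : List ℕ) : Prop := List.Lex (· < ·) u v

/-- Weak lexicographic order on lists. -/
def listLE (u v : List ℕ) : Prop := listLT u v ∨ u = v

/-- The first components `d_1¹ … d_k¹` of a block over Ω. -/
def comp1 (d : List (ℕ × ℕ)) : List ℕ := d.map Prod.fst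

/-- The second components `d_1² … d_k²` of a block over Ω. -/
def comp2 (d : List (ℕ × ℕ)) : List ℕ := d.map Prod.snd

/-- The digits `(1 - d_1⁺) … (1 - d_k⁺)` where `d⁺ = d¹ + d²`. -/
def comp3 (d : List (ℕ × ℕ)) : List ℕ := d.map fun x => 1 - x.1 - x.2

/-- Cyclic shift of a list by `j`. -/
def rot {α : Type*} (j : ℕ) (l : List α) : List α := l.drop j ++ l.take j

/-- `d` is a representation of the binary block `a`. -/
def IsRepresentation (a : List ℕ) (d : List (ℕ × ℕ)) : Prop :=
  d.length = a.length ∧ (∀ x ∈ d, x ∈ OmegaD) ∧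
  SmallestPeriod (cyc d) a.length ∧
  comp1 d = a ∧ listLE (comp3 d) (comp2 d) ∧ listLE (comp2 d) a ∧
  ∀ j < a.length,
    listLE (comp1 (rot j d)) a ∧ listLE (comp2 (rot j d)) a ∧ listLE (comp3 (rot j d)) a

/-- A binary block is admissible if it has a representation. -/
def IsAdmissible (a : List ℕ) : Prop := ∃ d, IsRepresentation a d

/-- The `i`-th consecutive triple of a block (0-indexed). -/
def tripleAt (a : List ℕ) (i : ℕ) : List ℕ :=
  [a.getD (3 * i) 0, a.getD (3 * i + 1) 0, a.getD (3 * i + 2) 0]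

/-- The edges of the directed graph on {000, 001, 100, 101} defining the subshift `X`. -/
def XEdge (u v : List ℕ) : Prop :=
  (u, v) ∈ ({([1,0,1], [0,0,1]), ([1,0,1], [0,0,0]), ([0,0,1], [0,0,0]),
             ([0,0,0], [1,0,1]), ([0,0,0], [1,0,0]), ([1,0,0], [1,0,1])} :
      Set (List ℕ × List ℕ))

/-!
Relative to the triangle `Δ_β`, the coordinates of the point coded by a word over three letters
are the values in base `β` of the sets of positions of the three letters. Hence a coding `w` is
univoque if and only if, whenever `w n ≠ j`, the letter `j` has value `< 1` in the tail after `n`.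
By Abel summation these values are monotone in the numbers of occurrences in prefixes, so a word
inherits univoqueness once each of its letter counts is dominated by a count in a univoque word.

In a word of period `3m+2` or `6m+4` some letter has frequency at least `(m+1)/(3m+2)`, because
`(m+1)/(3m+2)` and `(2m+2)/(6m+4)` are the least fractions with these denominators that are
`≥ 1/3`; by the cycle lemma some tail has at least `n(m+1)/(3m+2)` such letters among its first
`n` terms, for every `n`. On the other hand, no letter occurs more than `⌈n(m+1)/(3m+2)⌉` times in
a block of length `n` of `((012)^m 01)^∞` or of `((012)^m 01 (021)^m 02)^∞`. So as soon as one
univoque coding with either of the two periods exists, both of these words are univoque.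
-/

section Periodicity

lemma add_one_mod_eq_ite (i k : ℕ) :
    (i + 1) % k = if i % k + 1 = k then 0 else i % k + 1 := by
  rw [← Nat.mod_add_mod]
  split_ifs with h
  · rw [h, Nat.mod_self]
  · rcases k.eq_zero_or_pos with rfl | hk
    · simp only [Nat.mod_zero]
    · exact Nat.mod_eq_of_lt (lt_of_le_of_ne (Nat.mod_lt i hk) h)

lemma SmallestPeriod.of_dvd {α : Type*} {w : ℕ → α} {k : ℕ} (hk : 0 < k)
    (hper : Function.Periodic w k) (hdvd : ∀ j, Function.Periodic w j → k ∣ j) :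
    SmallestPeriod w k := by
  refine ⟨hk, hper, fun j hj hjk ↦ ?_⟩
  by_contra! h
  exact (Nat.le_of_dvd hj (hdvd j h)).not_gt hjk

end Periodicity

section Counting

lemma mul_count_lt_of_potential {P : ℕ → Prop} [DecidablePred P] {p q : ℕ} (h : ℕ → ℕ)
    (h_lt : h 0 < q) (h_succ : ∀ i, h (i + 1) + (if P i then q else 0) ≤ h i + p) (n : ℕ) :
    q * Nat.count P n < p * n + q := by
  suffices q * Nat.count P n + h n ≤ p * n + h 0 by lia
  induction n with
  | zero => simp
  | succ n ih =>
    have := h_succ n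
    rw [Nat.count_succ, mul_add, mul_ite, mul_one, mul_zero, mul_add]
    lia

lemma three_mul_count_le_of_sparse {P : ℕ → Prop} [DecidablePred P]
    (hP : ∀ i, P i → ¬P (i + 1) ∧ ¬P (i + 2)) : ∀ n, 3 * Nat.count P n ≤ n + 2
  | 0 => by simp
  | 1 => by have := Nat.count_le (p := P) (n := 1); lia
  | 2 => by
    have := hP 0
    simp only [Nat.count_succ, Nat.count_zero]
    split_ifs <;> simp_all
  | n + 3 => by
    have ih := three_mul_count_le_of_sparse hP n
    have h₀ := hP n
    have h₁ := hP (n + 1)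
    simp only [Nat.count_succ]
    split_ifs <;> lia

lemma exists_forall_le_of_le_add {α : Type*} [LinearOrder α] {g : ℕ → α} {T : ℕ} (hT : 0 < T)
    (hg : ∀ n, g n ≤ g (n + T)) : ∃ s, ∀ n, g s ≤ g n := by
  have g_mod_le (n : ℕ) : g (n % T) ≤ g n := by
    induction n using Nat.strong_induction_on with
    | _ n ih =>
      rcases lt_or_ge n T with hn | hn
      · rw [Nat.mod_eq_of_lt hn]
      · rw [Nat.mod_eq_sub_mod hn]
        simpa [Nat.sub_add_cancel hn] using (ih (n - T) (by lia)).trans (hg (n - T))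
  obtain ⟨s, -, hs⟩ := Finset.exists_min_image (Finset.range T) g ⟨0, by simpa using hT⟩
  exact ⟨s, fun n ↦ (hs _ (Finset.mem_range.2 (Nat.mod_lt n hT))).trans (g_mod_le n)⟩

-- The cycle lemma: start where the surplus `q * count - p * n` of a prefix is smallest.
lemma exists_forall_mul_le_mul_count {P : ℕ → Prop} [DecidablePred P] {T p q : ℕ} (hT : 0 < T)
    (hP : Function.Periodic P T) (hcount : p * T ≤ q * Nat.count P T) :
    ∃ s, ∀ n, p * n ≤ q * Nat.count (fun i ↦ P (s + i)) n := by
  let surplus (n : ℕ) : ℤ := q * Nat.count P n - p * n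
  have surplus_le_add (n : ℕ) : surplus n ≤ surplus (n + T) := by
    have : Nat.count P (n + T) = Nat.count P n + Nat.count P T := by
      simp only [Nat.count_add', hP _]
    simp only [surplus, this]
    zify at hcount
    push_cast
    linarith
  obtain ⟨s, hs⟩ := exists_forall_le_of_le_add hT surplus_le_add
  refine ⟨s, fun n ↦ ?_⟩
  have := hs (s + n)
  simp only [surplus, Nat.count_add] at this
  zify
  push_cast at this
  linarith

lemma exists_le_card_mul_count {α : Type*} [Fintype α] [Nonempty α] [DecidableEq α] (w : ℕ → α)
    (n : ℕ) : ∃ a, n ≤ Fintype.card α * Nat.count (fun i ↦ w i = a) n := by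
  have sum_count : ∑ a, Nat.count (fun i ↦ w i = a) n = n := by
    simp only [Nat.count_eq_card_filter_range]
    rw [← Finset.card_eq_sum_card_fiberwise fun _ _ ↦ Finset.mem_coe.2 (Finset.mem_univ _),
      Finset.card_range]
  obtain ⟨a, -, ha⟩ := Finset.exists_le_of_sum_le (s := Finset.univ) (f := fun _ : α ↦ n)
    (g := fun a ↦ Fintype.card α * Nat.count (fun i ↦ w i = a) n) Finset.univ_nonempty
    (by rw [← Finset.mul_sum, sum_count]; simp)
  exact ⟨a, ha⟩

end Counting

section Value

/-- The value `∑ β^{-(i+1)}`, over the indices `i` satisfying `P`, of a set of positions in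
base `β`. -/
def value (β : ℝ) (P : ℕ → Prop) [DecidablePred P] : ℝ :=
  ∑' i : ℕ, if P i then (β ^ (i + 1))⁻¹ else 0

variable {β : ℝ}

lemma sum_range_value_eq_sum_count (P : ℕ → Prop) [DecidablePred P] (N : ℕ) :
    ∑ i ∈ Finset.range N, (if P i then (β ^ (i + 1))⁻¹ else 0) =
      Nat.count P N * (β ^ N)⁻¹ +
        ∑ n ∈ Finset.range N, Nat.count P n * ((β ^ n)⁻¹ - (β ^ (n + 1))⁻¹) := by
  induction N with
  | zero => simp
  | succ N ih =>
    rw [Finset.sum_range_succ, Finset.sum_range_succ, ih, Nat.count_succ]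
    split_ifs <;> push_cast <;> ring

variable (hβ : 1 < β) (P Q : ℕ → Prop) [DecidablePred P] [DecidablePred Q]
include hβ

lemma hasSum_inv_pow_succ : HasSum (fun i : ℕ ↦ (β ^ (i + 1))⁻¹) (β - 1)⁻¹ := by
  have hβ₀ : 0 < β := by linarith
  have limit : β⁻¹ * (1 - β⁻¹)⁻¹ = (β - 1)⁻¹ := by
    rw [← mul_inv, mul_sub, mul_one, mul_inv_cancel₀ hβ₀.ne']
  simpa only [pow_succ', mul_inv, inv_pow, limit] using
    (hasSum_geometric_of_lt_one (inv_nonneg.2 hβ₀.le) (inv_lt_one_of_one_lt₀ hβ)).mul_left β⁻¹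

lemma hasSum_value : HasSum (fun i : ℕ ↦ if P i then (β ^ (i + 1))⁻¹ else 0) (value β P) :=
  (((hasSum_inv_pow_succ hβ).summable.indicator {i | P i}).congr
    fun i ↦ by simp [Set.indicator_apply]).hasSum

lemma value_nonneg : 0 ≤ value β P :=
  tsum_nonneg fun i ↦ by split_ifs <;> positivity

lemma mul_value : β * value β P = (if P 0 then 1 else 0) + value β (fun i ↦ P (i + 1)) := by
  have hβ₀ : β ≠ 0 := by linarith
  rw [value, (hasSum_value hβ P).summable.tsum_eq_zero_add, mul_add, ← tsum_mul_left, value]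
  congr 1
  · simp [hβ₀]
  · refine tsum_congr fun i ↦ ?_
    rw [mul_ite, mul_zero, pow_succ' β (i + 1), mul_inv, mul_inv_cancel_left₀ hβ₀]

lemma value_le_value_of_count_le (h : ∀ n, Nat.count P n ≤ Nat.count Q n) :
    value β P ≤ value β Q := by
  refine le_of_tendsto_of_tendsto' (hasSum_value hβ P).tendsto_sum_nat
    (hasSum_value hβ Q).tendsto_sum_nat fun N ↦ ?_
  have inv_pow_anti (n : ℕ) : 0 ≤ (β ^ n)⁻¹ - (β ^ (n + 1))⁻¹ :=
    sub_nonneg.2 (inv_anti₀ (by positivity) (pow_le_pow_right₀ hβ.le n.le_succ))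
  rw [sum_range_value_eq_sum_count, sum_range_value_eq_sum_count]
  refine add_le_add (mul_le_mul_of_nonneg_right (mod_cast h N) (by positivity))
    (Finset.sum_le_sum fun n _ ↦ mul_le_mul_of_nonneg_right (mod_cast h n) (inv_pow_anti n))

lemma sum_value {α : Type*} [Fintype α] [DecidableEq α] (w : ℕ → α) :
    ∑ a, value β (fun i ↦ w i = a) = (β - 1)⁻¹ := by
  have h := hasSum_sum fun a (_ : a ∈ Finset.univ) ↦ hasSum_value hβ (fun i ↦ w i = a)
  simp only [Finset.sum_ite_eq, Finset.mem_univ, if_true] at h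
  exact h.unique (hasSum_inv_pow_succ hβ)

end Value

section Geometry

/-- The three digits of `Ω`, indexed by `Fin 3`. -/
def digit : Fin 3 → ℝ × ℝ := ![(0, 0), (1, 0), (0, 1)]

/-- The coordinates of a point relative to the triangle `Δ_β`, scaled to have sum `1 / (β - 1)`:
the `j`-th one is `1 / (β - 1)` at the vertex `digit j / (β - 1)` and `0` at the others. -/
def bary (β : ℝ) (p : ℝ × ℝ) : Fin 3 → ℝ := ![(β - 1)⁻¹ - p.1 - p.2, p.1, p.2]

lemma range_digit : Set.range digit = OmegaR := by
  ext p
  simp [digit, OmegaR, -Matrix.range_cons, Fin.exists_fin_succ, eq_comm]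

lemma digit_injective : Function.Injective digit := by
  intro i j
  fin_cases i <;> fin_cases j <;> simp [digit]

lemma exists_digit_comp_eq {ι : Type*} {d : ι → ℝ × ℝ} (hd : ∀ i, d i ∈ OmegaR) :
    ∃ w : ι → Fin 3, digit ∘ w = d := by
  simp only [← range_digit, Set.mem_range] at hd
  choose w hw using hd
  exact ⟨w, funext hw⟩

lemma smallestPeriod_digit_comp_iff {w : ℕ → Fin 3} {k : ℕ} :
    SmallestPeriod (digit ∘ w) k ↔ SmallestPeriod w k := by
  simp only [SmallestPeriod, Function.comp_apply, digit_injective.eq_iff, digit_injective.ne_iff]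

lemma convex_setOf_bary_nonneg (β : ℝ) : Convex ℝ {p | ∀ j, 0 ≤ bary β p j} := by
  intro x hx y hy a b ha hb hab j
  have bary_combo : bary β (a • x + b • y) j = a * bary β x j + b * bary β y j := by
    fin_cases j <;> simp [bary]
    linear_combination -(β - 1)⁻¹ * hab
  rw [bary_combo]
  exact add_nonneg (mul_nonneg ha (hx j)) (mul_nonneg hb (hy j))

variable {β : ℝ} (hβ : 1 < β)
include hβ

lemma bary_tsum_digit (w : ℕ → Fin 3) (j : Fin 3) :
    bary β (∑' i : ℕ, (β ^ (i + 1))⁻¹ • digit (w i)) j = value β (fun i ↦ w i = j) := by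
  have coords : ∑' i : ℕ, (β ^ (i + 1))⁻¹ • digit (w i) =
      (value β (fun i ↦ w i = 1), value β (fun i ↦ w i = 2)) := by
    refine Eq.trans (tsum_congr fun i ↦ ?_)
      ((hasSum_value hβ (w · = 1)).prodMk (hasSum_value hβ (w · = 2))).tsum_eq
    generalize w i = a
    fin_cases a <;> simp [digit]
  have total := sum_value hβ w
  rw [Fin.sum_univ_three] at total
  rw [coords]
  fin_cases j <;> simp only [bary, Fin.zero_eta, Fin.mk_one, Fin.reduceFinMk, Matrix.cons_val]
  linarith

lemma bary_smul_sub_digit (p : ℝ × ℝ) (i j : Fin 3) :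
    bary β (β • p - digit j) i = β * bary β p i - if i = j then 1 else 0 := by
  have : β - 1 ≠ 0 := by linarith
  fin_cases i <;> fin_cases j <;> simp [bary, digit] <;> field_simp <;> ring

lemma sum_bary_smul_vertex (p : ℝ × ℝ) :
    ∑ j, ((β - 1) * bary β p j) • ((β - 1)⁻¹ • digit j) = p := by
  have : β - 1 ≠ 0 := by linarith
  ext <;> simp [Fin.sum_univ_three, bary, digit] <;> field_simp

lemma vertex_mem_Delta (j : Fin 3) : (β - 1)⁻¹ • digit j ∈ Delta β :=
  subset_convexHull ℝ _ ⟨fun _ ↦ digit j, fun _ ↦ range_digit ▸ Set.mem_range_self j,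
    ((hasSum_inv_pow_succ hβ).smul_const (digit j)).tsum_eq.symm⟩

lemma mem_Delta_iff {p : ℝ × ℝ} : p ∈ Delta β ↔ ∀ j, 0 ≤ bary β p j := by
  constructor
  · refine fun hp ↦ convexHull_min ?_ (convex_setOf_bary_nonneg β) hp
    rintro _ ⟨d, hd, rfl⟩ j
    obtain ⟨w, rfl⟩ := exists_digit_comp_eq hd
    simpa only [Function.comp_apply, bary_tsum_digit hβ] using value_nonneg hβ _
  · intro hp
    rw [← sum_bary_smul_vertex hβ p]
    refine (convex_convexHull ℝ _).sum_mem
      (fun j _ ↦ mul_nonneg (by linarith) (hp j)) ?_ fun j _ ↦ vertex_mem_Delta hβ j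
    have : β - 1 ≠ 0 := by linarith
    rw [Fin.sum_univ_three]
    simp only [bary, Matrix.cons_val]
    field_simp
    ring

lemma mem_image_fmap_Delta_iff {p : ℝ × ℝ} (hp : p ∈ Delta β) (j : Fin 3) :
    p ∈ fmap β (digit j) '' Delta β ↔ 1 ≤ β * bary β p j := by
  have hβ₀ : β ≠ 0 := by linarith
  have mem_image : p ∈ fmap β (digit j) '' Delta β ↔ β • p - digit j ∈ Delta β := by
    constructor
    · rintro ⟨y, hy, rfl⟩
      simpa [fmap, smul_smul, hβ₀] using hy
    · exact fun h ↦ ⟨_, h, by simp [fmap, smul_smul, hβ₀]⟩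
  simp only [mem_image, mem_Delta_iff hβ, bary_smul_sub_digit hβ]
  refine ⟨fun h ↦ by simpa using h j, fun h i ↦ ?_⟩
  split_ifs with hij
  · simpa [hij] using h
  · simpa using mul_nonneg (by linarith) ((mem_Delta_iff hβ).1 hp i)

lemma mem_Ofat_iff {p : ℝ × ℝ} (hp : p ∈ Delta β) :
    p ∈ Ofat β ↔ ∃ i j, i ≠ j ∧ 1 ≤ β * bary β p i ∧ 1 ≤ β * bary β p j := by
  simp only [Ofat, ← range_digit, Set.biUnion_range, Set.mem_iUnion, Set.mem_inter_iff,
    exists_prop, digit_injective.ne_iff, mem_image_fmap_Delta_iff hβ hp]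

end Geometry

section Univoque

variable {β : ℝ} (hβ : 1 < β)
include hβ

lemma digit_comp_mem_Ufat_iff {w : ℕ → Fin 3} :
    digit ∘ w ∈ Ufat β ↔
      ∀ n j, w n ≠ j → value β (fun i ↦ w (n + 1 + i) = j) < 1 := by
  have mem_Omega (i : ℕ) : (digit ∘ w) i ∈ OmegaR := range_digit ▸ Set.mem_range_self (w i)
  have mem_Delta (n : ℕ) : ∑' i : ℕ, (β ^ (i + 1))⁻¹ • digit (w (n + i)) ∈ Delta β :=
    subset_convexHull ℝ _ ⟨_, fun i ↦ mem_Omega (n + i), rfl⟩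
  have mul_bary (n : ℕ) (j : Fin 3) :
      β * bary β (∑' i : ℕ, (β ^ (i + 1))⁻¹ • digit (w (n + i))) j =
        (if w n = j then 1 else 0) + value β (fun i ↦ w (n + 1 + i) = j) := by
    rw [bary_tsum_digit hβ, mul_value hβ]
    simp only [add_zero, add_right_comm n 1, add_assoc]
  constructor
  · rintro ⟨-, not_mem_Ofat⟩ n j hj
    by_contra! one_le
    refine not_mem_Ofat n ((mem_Ofat_iff hβ (mem_Delta n)).2 ⟨w n, j, hj, ?_, ?_⟩)
    · rw [mul_bary, if_pos rfl]
      linarith [value_nonneg hβ (fun i ↦ w (n + 1 + i) = w n)]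
    · rwa [mul_bary, if_neg hj, zero_add]
  · refine fun h ↦ ⟨mem_Omega, fun n hn ↦ ?_⟩
    obtain ⟨i, j, hij, hi, hj⟩ := (mem_Ofat_iff hβ (mem_Delta n)).1 hn
    obtain ⟨k, hk, one_le⟩ : ∃ k, w n ≠ k ∧ 1 ≤ value β (fun i ↦ w (n + 1 + i) = k) := by
      rw [mul_bary] at hi hj
      by_cases hwi : w n = i
      · have hwj : w n ≠ j := hwi ▸ hij
        exact ⟨j, hwj, by simpa [hwj] using hj⟩
      · exact ⟨i, hwi, by simpa [hwi] using hi⟩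
    exact (h n k hk).not_ge one_le

lemma value_succ_le_value (w : ℕ → Fin 3) (j : Fin 3) (n : ℕ) (hj : w n = j) :
    value β (fun i ↦ w (n + 1 + i) = j) ≤ value β (fun i ↦ w (n + i) = j) := by
  have value_le : value β (fun i ↦ w (n + 1 + i) = j) ≤ (β - 1)⁻¹ :=
    (Finset.single_le_sum (fun a _ ↦ value_nonneg hβ (fun i ↦ w (n + 1 + i) = a))
      (Finset.mem_univ j)).trans_eq (sum_value hβ fun i ↦ w (n + 1 + i))
  have recursion := mul_value hβ (fun i ↦ w (n + i) = j)
  simp only [add_zero, hj, if_true, ← add_assoc, add_right_comm n _ 1] at recursion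
  rw [← one_div, le_div_iff₀ (by linarith)] at value_le
  nlinarith

lemma value_lt_one_of_periodic {w : ℕ → Fin 3} (hw : digit ∘ w ∈ Ufat β) {T : ℕ} (hT : 0 < T)
    (hper : Function.Periodic w T) {j : Fin 3} (hj : ∃ i, w i ≠ j) (n : ℕ) :
    value β (fun i ↦ w (n + i) = j) < 1 := by
  obtain ⟨i₀, hi₀⟩ := hj
  have eventually_lt (k : ℕ) (hk : i₀ + 1 ≤ k) : value β (fun i ↦ w (k + i) = j) < 1 := by
    induction k, hk using Nat.le_induction with
    | base => exact (digit_comp_mem_Ufat_iff hβ).1 hw i₀ j hi₀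
    | succ k _ ih =>
      by_cases hwk : w k = j
      · exact (value_succ_le_value hβ w j k hwk).trans_lt ih
      · exact (digit_comp_mem_Ufat_iff hβ).1 hw k j hwk
  convert eventually_lt (n + (i₀ + 1) * T) (by nlinarith) using 4 with i
  rw [add_right_comm]
  exact (hper.nat_mul (i₀ + 1) (n + i)).symm

end Univoque

section EvenlySpread

/-- Every letter occurs at most `⌈n p / q⌉` times in each block of `n` consecutive terms of `w`;
the bound is stated without division. -/
def EvenlySpread {α : Type*} [DecidableEq α] (p q : ℕ) (w : ℕ → α) : Prop :=
  ∀ a s n, q * Nat.count (fun i ↦ w (s + i) = a) n < p * n + q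

-- A block of `w'` is dominated by the block of `w` provided by the cycle lemma.
lemma EvenlySpread.digit_comp_mem_Ufat {β : ℝ} (hβ : 1 < β) {p q T : ℕ} {w w' : ℕ → Fin 3}
    (hw' : EvenlySpread p q w') (hw : digit ∘ w ∈ Ufat β) (hT : 0 < T)
    (hper : Function.Periodic w T) {a : Fin 3} (ha : ∃ i, w i ≠ a)
    (hcount : p * T ≤ q * Nat.count (fun i ↦ w i = a) T) : digit ∘ w' ∈ Ufat β := by
  refine (digit_comp_mem_Ufat_iff hβ).2 fun n j _ ↦ ?_
  obtain ⟨s, hs⟩ := exists_forall_mul_le_mul_count (P := (w · = a)) hT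
    (fun i ↦ by simp only [hper i]) hcount
  refine (value_le_value_of_count_le hβ _ (fun i ↦ w (s + i) = a) fun k ↦ ?_).trans_lt
    (value_lt_one_of_periodic hβ hw hT hper ha s)
  have count_lt := (hw' j (n + 1) k).trans_le (Nat.add_le_add_right (hs k) q)
  rw [← Nat.mul_succ] at count_lt
  exact Nat.lt_succ_iff.1 (lt_of_mul_lt_mul_left' count_lt)

lemma EvenlySpread.exists_mem_Ufat {β : ℝ} (hβ : 1 < β) {p q k T : ℕ} {w' : ℕ → Fin 3}
    (hw' : EvenlySpread p q w') (hk : SmallestPeriod w' k) (hT : 1 < T)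
    (hpT : ∀ c, T ≤ 3 * c → p * T ≤ q * c) (h : ∃ d ∈ Ufat β, SmallestPeriod d T) :
    ∃ d ∈ Ufat β, SmallestPeriod d k := by
  obtain ⟨d, hd, hdT⟩ := h
  obtain ⟨w, rfl⟩ := exists_digit_comp_eq hd.1
  obtain ⟨T_pos, hper, hmin⟩ := smallestPeriod_digit_comp_iff.1 hdT
  obtain ⟨a, ha⟩ := exists_le_card_mul_count w T
  have exists_ne : ∃ i, w i ≠ a := by
    by_contra! hconst
    obtain ⟨i, hi⟩ := hmin 1 one_pos hT
    exact hi ((hconst _).trans (hconst i).symm)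
  exact ⟨digit ∘ w', hw'.digit_comp_mem_Ufat hβ hd T_pos hper exists_ne (hpT _ ha),
    smallestPeriod_digit_comp_iff.2 hk⟩

end EvenlySpread

section Words

/-- The periodic word `((012)^m 01)^∞`. -/
def baseWord (m i : ℕ) : Fin 3 := Fin.ofNat 3 (i % (3 * m + 2))

/-- The word `((012)^m 01 (021)^m 02)^∞`: the letters `1` and `2 = -1` of `baseWord m` are
exchanged in every other block of length `3 * m + 2`. -/
def twistedWord (m i : ℕ) : Fin 3 :=
  if Even (i / (3 * m + 2)) then baseWord m i else -baseWord m i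

lemma baseWord_eq_iff {m i : ℕ} {j : Fin 3} : baseWord m i = j ↔ i % (3 * m + 2) % 3 = j := by
  simp [baseWord, Fin.ext_iff]

lemma twistedWord_eq_zero_iff {m i : ℕ} : twistedWord m i = 0 ↔ baseWord m i = 0 := by
  unfold twistedWord
  split_ifs
  · rfl
  · generalize baseWord m i = a
    revert a
    decide

lemma baseWord_add_mul (m i q : ℕ) : baseWord m (i + (3 * m + 2) * q) = baseWord m i := by
  simp [baseWord]

lemma baseWord_add_sub_eq_zero {m i : ℕ} {j : Fin 3} (h : baseWord m i = j) :
    baseWord m (i + (3 * m + 2 - j)) = 0 := by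
  rw [baseWord_eq_iff] at h ⊢
  have := Nat.mod_lt i (show 0 < 3 * m + 2 by lia)
  have : i + (3 * m + 2 - j) = i % (3 * m + 2) - j + (3 * m + 2) * (i / (3 * m + 2) + 1) := by
    have := Nat.mod_add_div i (3 * m + 2)
    lia
  have lt : i % (3 * m + 2) - j < 3 * m + 2 := by lia
  rw [this, Nat.add_mul_mod_self_left, Nat.mod_eq_of_lt lt, Fin.val_zero]
  lia

-- The potential is `(m + 1) * (s + i) + (2 * m + 1)` modulo `3 * m + 2`: since `m + 1` inverts `3`,
-- it wraps around exactly at the letters `0`.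
lemma mul_count_baseWord_eq_zero_lt (m s n : ℕ) :
    (3 * m + 2) * Nat.count (fun i ↦ baseWord m (s + i) = 0) n < (m + 1) * n + (3 * m + 2) := by
  let potential (i : ℕ) : ℕ :=
    let r := (s + i) % (3 * m + 2)
    (if r % 3 = 0 then 2 * m + 1 else if r % 3 = 1 then 0 else m + 1) + r / 3
  have r_lt (i : ℕ) : i % (3 * m + 2) < 3 * m + 2 := Nat.mod_lt i (by lia)
  refine mul_count_lt_of_potential potential ?_ (fun i ↦ ?_) n
  · have := r_lt (s + 0)
    simp only [potential]
    split_ifs <;> lia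
  · have := r_lt (s + i)
    simp only [potential, ← add_assoc, add_one_mod_eq_ite, baseWord_eq_iff, Fin.val_zero]
    split_ifs <;> lia

lemma evenlySpread_baseWord (m : ℕ) : EvenlySpread (m + 1) (3 * m + 2) (baseWord m) := by
  refine fun j s n ↦ (Nat.mul_le_mul_left _ (Nat.count_mono_left fun i _ hi ↦ ?_)).trans_lt
    (mul_count_baseWord_eq_zero_lt m (s + (3 * m + 2 - j)) n)
  rw [add_right_comm]
  exact baseWord_add_sub_eq_zero hi

lemma twistedWord_mul_add (m q : ℕ) {r : ℕ} (hr : r < 3 * m + 2) :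
    twistedWord m ((3 * m + 2) * q + r) = if Even q then Fin.ofNat 3 r else -Fin.ofNat 3 r := by
  rw [twistedWord, baseWord, Nat.mul_add_mod, Nat.mod_eq_of_lt hr, Nat.mul_add_div (by lia),
    Nat.div_eq_of_lt hr, add_zero]

lemma twistedWord_ne_of_ne_zero (m i : ℕ) (h : twistedWord m i ≠ 0) :
    twistedWord m (i + 1) ≠ twistedWord m i ∧ twistedWord m (i + 2) ≠ twistedWord m i := by
  obtain ⟨q, r, hr, rfl⟩ : ∃ q r, r < 3 * m + 2 ∧ i = (3 * m + 2) * q + r :=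
    ⟨i / (3 * m + 2), i % (3 * m + 2), Nat.mod_lt _ (by lia), (Nat.div_add_mod _ _).symm⟩
  rw [twistedWord_mul_add m q hr] at h ⊢
  obtain hr' | rfl | rfl : r + 2 < 3 * m + 2 ∨ r = 3 * m ∨ r = 3 * m + 1 := by lia
  · rw [add_assoc, add_assoc, twistedWord_mul_add m q (by lia), twistedWord_mul_add m q hr']
    have shift (k : ℕ) : Fin.ofNat 3 (r + k) = Fin.ofNat 3 r + Fin.ofNat 3 k := by
      simp [Fin.ext_iff, Fin.val_add]
    rw [shift 1, shift 2]
    generalize Fin.ofNat 3 r = b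
    revert b
    split_ifs <;> decide
  · have letter : Fin.ofNat 3 (3 * m) = 0 := by simp [Fin.ext_iff]
    rw [letter, neg_zero, ite_self] at h
    exact absurd rfl h
  · have letter : Fin.ofNat 3 (3 * m + 1) = 1 := by simp [Fin.ext_iff]
    rw [show (3 * m + 2) * q + (3 * m + 1) + 1 = (3 * m + 2) * (q + 1) + 0 by ring,
      show (3 * m + 2) * q + (3 * m + 1) + 2 = (3 * m + 2) * (q + 1) + 1 by ring,
      twistedWord_mul_add m (q + 1) (by lia), twistedWord_mul_add m (q + 1) (by lia),
      letter]
    by_cases hq : Even q <;> simp only [Nat.even_add_one, hq] <;> decide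

lemma evenlySpread_twistedWord (m : ℕ) :
    EvenlySpread (m + 1) (3 * m + 2) (twistedWord m) := by
  intro a s n
  by_cases ha : a = 0
  · simpa only [ha, twistedWord_eq_zero_iff] using mul_count_baseWord_eq_zero_lt m s n
  · have three_mul_count : 3 * Nat.count (fun i ↦ twistedWord m (s + i) = a) n ≤ n + 2 :=
      three_mul_count_le_of_sparse (fun i hi ↦ hi ▸ twistedWord_ne_of_ne_zero m (s + i) (hi ▸ ha)) n
    nlinarith

-- `3 * m` is the only position modulo `3 * m + 2` with a `0` both there and two places later.
lemma dvd_of_baseWord_add_eq_zero_iff (m j : ℕ)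
    (hj : ∀ i, baseWord m (i + j) = 0 ↔ baseWord m i = 0) : 3 * m + 2 ∣ j := by
  have zeros_iff (i : ℕ) :
      baseWord m i = 0 ∧ baseWord m (i + 2) = 0 ↔ i % (3 * m + 2) = 3 * m := by
    have := Nat.mod_lt i (show 0 < 3 * m + 2 by lia)
    simp only [baseWord_eq_iff, Fin.val_zero, ← one_add_one_eq_two, ← add_assoc,
      add_one_mod_eq_ite]
    split_ifs <;> lia
  have mod_self : 3 * m % (3 * m + 2) = 3 * m := Nat.mod_eq_of_lt (by lia)
  have mod_add : (3 * m + j) % (3 * m + 2) = 3 * m := by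
    rw [← zeros_iff, add_right_comm, hj, hj, zeros_iff, mod_self]
  have : 3 * m + j ≡ 3 * m + 0 [MOD 3 * m + 2] := mod_add.trans mod_self.symm
  exact Nat.modEq_zero_iff_dvd.1 this.add_left_cancel'

lemma smallestPeriod_baseWord (m : ℕ) : SmallestPeriod (baseWord m) (3 * m + 2) :=
  .of_dvd (by lia) (fun i ↦ by simpa using baseWord_add_mul m i 1)
    fun j hj ↦ dvd_of_baseWord_add_eq_zero_iff m j fun i ↦ by rw [hj i]

lemma smallestPeriod_twistedWord (m : ℕ) : SmallestPeriod (twistedWord m) (6 * m + 4) := by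
  have two_blocks : 6 * m + 4 = (3 * m + 2) * 2 := by ring
  refine .of_dvd (by lia) (fun i ↦ ?_) fun j hj ↦ ?_
  · rw [two_blocks, twistedWord, baseWord_add_mul, Nat.add_mul_div_left _ _ (by lia)]
    simp only [Nat.even_add, even_two, iff_true]
    rfl
  · obtain ⟨q, rfl⟩ := dvd_of_baseWord_add_eq_zero_iff m j fun i ↦ by
      rw [← twistedWord_eq_zero_iff, hj i, twistedWord_eq_zero_iff]
    have at_one := hj ((3 * m + 2) * 0 + (3 * m + 1))
    have letter : Fin.ofNat 3 (3 * m + 1) = 1 := by simp [Fin.ext_iff]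
    rw [add_right_comm, ← mul_add, twistedWord_mul_add m _ (by lia),
      twistedWord_mul_add m 0 (by lia), letter, zero_add, if_pos Even.zero] at at_one
    have even_q : Even q := by
      by_contra hq
      rw [if_neg hq] at at_one
      exact absurd at_one (by decide)
    exact two_blocks ▸ mul_dvd_mul_left _ even_q.two_dvd

end Words

theorem stmt6_general (m : ℕ) {β : ℝ} (hβ : 1 < β) :
    (∃ d ∈ Ufat β, SmallestPeriod d (6 * m + 4)) ↔
      ∃ d ∈ Ufat β, SmallestPeriod d (3 * m + 2) := by
  constructor
  · refine (evenlySpread_baseWord m).exists_mem_Ufat hβ (smallestPeriod_baseWord m) (by lia)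
      fun c hc ↦ ?_
    have count_ge : 2 * (m + 1) ≤ c := by lia
    calc (m + 1) * (6 * m + 4) = (3 * m + 2) * (2 * (m + 1)) := by ring
      _ ≤ (3 * m + 2) * c := Nat.mul_le_mul_left _ count_ge
  · refine (evenlySpread_twistedWord m).exists_mem_Ufat hβ (smallestPeriod_twistedWord m)
      (by lia) fun c hc ↦ ?_
    have count_ge : m + 1 ≤ c := by lia
    calc (m + 1) * (3 * m + 2) = (3 * m + 2) * (m + 1) := mul_comm ..
      _ ≤ (3 * m + 2) * c := Nat.mul_le_mul_left _ count_ge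

/-- β_{6m+4} = β_{3m+2} for every m ≥ 0; consequently for every β ∈ (1,2]
strictly above the common critical base, if 𝐔_β contains a sequence of
smallest period 3m+2 then it contains one of smallest period 6m+4. -/
theorem stmt6 (m : ℕ) :
    FatSierpinski.betaK (6 * m + 4) = FatSierpinski.betaK (3 * m + 2) ∧
    ∀ β ∈ Set.Ioc (1 : ℝ) 2, FatSierpinski.betaK (3 * m + 2) < β →
      (∃ d ∈ FatSierpinski.Ufat β, FatSierpinski.SmallestPeriod d (3 * m + 2)) →
      ∃ d ∈ FatSierpinski.Ufat β, FatSierpinski.SmallestPeriod d (6 * m + 4) := by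
  exact ⟨congrArg sInf (Set.ext fun β ↦ and_congr_right fun hβ ↦ stmt6_general m hβ.1),
    fun β hβ _ ↦ (stmt6_general m hβ.1).2⟩

end FatSierpinski
end
end

section
/- The sequence n ↦ β̂_n (n ≥ 0) is strictly decreasing and converges to β_c as n → ∞. -/
open Filter Set

noncomputable section

namespace FatSierpinski

/-!
Write `T = t_{n+2}` and `V = Θ(T⁺)`. Then `V⁺ = Θ(T)`, the expansion for `β̂_n` is `T⁺ (V⁺)^∞`, and
since `Θ` is an involution the one for `β̂_{n+1}` is `T⁺ V⁺ (V T⁺)^∞`. Turning a period `V T⁺` into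
`V⁺ V⁺` gains one unit in the last position of `V` and loses, in the same unit, less than the value
of `T⁺`. So in every base where `T⁺` has value at most `1`, the expansion for `β̂_n` has a larger
value than the one for `β̂_{n+1}`. This applies to the base `β̂_{n+1}`, where `T⁺` begins an
expansion of `1`: there the expansion for `β̂_n` has value greater than `1`, and since values
decrease with the base, `β̂_{n+1} < β̂_n`. The expansions for the `β̂_n` converge digitwise to `λ`,
so their values converge in each fixed base; comparison with bases on either side of `β_c` gives
the limit.
-/

/-! ### Values of sequences -/

/-- The value `∑_{i=1}^∞ a_i β^{-i}` of the digit sequence `a` in base `β`, with `a` indexed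
from `0`. -/
def expansionValue (β : ℝ) (a : ℕ → ℕ) : ℝ := ∑' i : ℕ, (a i : ℝ) / β ^ (i + 1)

theorem SumsToOne.ne_zero {β : ℝ} {a : ℕ → ℕ} (h : SumsToOne β a) : a ≠ 0 := by
  rintro rfl
  simp [SumsToOne] at h

theorem summable_expansion {β : ℝ} (hβ : 1 < β) {a : ℕ → ℕ} (ha : BddAbove (range a)) :
    Summable fun i : ℕ => (a i : ℝ) / β ^ (i + 1) := by
  obtain ⟨D, hD⟩ := ha
  have hgeom : Summable fun i : ℕ => (D : ℝ) * β⁻¹ ^ (i + 1) :=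
    ((summable_nat_add_iff 1).2 (summable_geometric_of_lt_one (by positivity)
      (inv_lt_one_of_one_lt₀ hβ))).mul_left _
  refine hgeom.of_nonneg_of_le (fun i => by positivity) fun i => ?_
  have hi : (a i : ℝ) ≤ D := mod_cast hD (mem_range_self i)
  rw [div_eq_mul_inv, inv_pow]
  gcongr

theorem expansionValue_nonneg {β : ℝ} (hβ : 0 ≤ β) (a : ℕ → ℕ) : 0 ≤ expansionValue β a :=
  tsum_nonneg fun i => by positivity

theorem expansionValue_eq_head_add_tail {β : ℝ} (hβ : 1 < β) {a : ℕ → ℕ}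
    (ha : BddAbove (range a)) :
    expansionValue β a = (a 0 + expansionValue β fun i => a (i + 1)) / β := by
  rw [expansionValue, (summable_expansion hβ ha).tsum_eq_zero_add, expansionValue, add_div,
    ← tsum_div_const]
  simp only [pow_succ, pow_zero, one_mul, div_div]

theorem expansionValue_strictAntiOn {a : ℕ → ℕ} (ha : BddAbove (range a)) (h0 : a ≠ 0) :
    StrictAntiOn (fun β => expansionValue β a) (Ioi 1) := by
  intro b hb c hc hbc
  have hb0 : 0 < b := zero_lt_one.trans hb
  obtain ⟨k, hk⟩ := Function.ne_iff.1 h0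
  have hk0 : (0 : ℝ) < a k := mod_cast Nat.pos_of_ne_zero hk
  refine (summable_expansion hc ha).tsum_lt_tsum (i := k) (fun i => ?_) ?_
    (summable_expansion hb ha)
  · gcongr
  · gcongr

theorem tendsto_expansionValue {ι : Type*} {l : Filter ι} {β : ℝ} (hβ : 1 < β) {D : ℕ}
    {a : ι → ℕ → ℕ} {x : ℕ → ℕ} (ha : ∀ n i, a n i ≤ D) (hax : Tendsto a l (nhds x)) :
    Tendsto (fun n => expansionValue β (a n)) l (nhds (expansionValue β x)) := by
  have hbound : Summable fun i : ℕ => (D : ℝ) / β ^ (i + 1) :=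
    summable_expansion (a := fun _ => D) hβ ⟨D, forall_mem_range.2 fun _ => le_rfl⟩
  refine tendsto_tsum_of_dominated_convergence hbound (fun i => ?_) (.of_forall fun n i => ?_)
  · exact ((continuous_of_discreteTopology.tendsto (x i)).comp
      (tendsto_pi_nhds.1 hax i)).div_const _
  · have hi : (a n i : ℝ) ≤ D := mod_cast ha n i
    rw [Real.norm_of_nonneg (by positivity)]
    gcongr

theorem tendsto_base_of_sumsToOne {ι : Type*} {l : Filter ι} [l.NeBot] {D : ℕ} {a : ι → ℕ → ℕ}
    {x : ℕ → ℕ} (ha : ∀ n i, a n i ≤ D) (hax : Tendsto a l (nhds x)) {b : ι → ℝ} {c : ℝ}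
    (hb : ∀ n, 1 < b n) (hba : ∀ n, SumsToOne (b n) (a n)) (hc : 1 < c) (hcx : SumsToOne c x) :
    Tendsto b l (nhds c) := by
  have hanti : ∀ n, StrictAntiOn (fun β => expansionValue β (a n)) (Ioi 1) := fun n =>
    expansionValue_strictAntiOn ⟨D, forall_mem_range.2 (ha n)⟩ (hba n).ne_zero
  have hx : ∀ i, x i ≤ D := fun i => le_of_tendsto' (tendsto_pi_nhds.1 hax i) fun n => ha n i
  have hantix : StrictAntiOn (fun β => expansionValue β x) (Ioi 1) :=
    expansionValue_strictAntiOn ⟨D, forall_mem_range.2 hx⟩ hcx.ne_zero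
  refine tendsto_order.2 ⟨fun c' hc' => ?_, fun c' hc' => ?_⟩
  · rcases le_or_gt c' 1 with h1 | h1
    · exact .of_forall fun n => h1.trans_lt (hb n)
    have hlt : 1 < expansionValue c' x := hcx.symm.trans_lt (hantix h1 hc hc')
    filter_upwards [(tendsto_expansionValue h1 ha hax).eventually_const_lt hlt] with n hn
    exact ((hanti n).lt_iff_gt (hb n) h1).1 ((hba n).trans_lt hn)
  · have h1 : 1 < c' := hc.trans hc'
    have hlt : expansionValue c' x < 1 := (hantix hc h1 hc').trans_eq hcx
    filter_upwards [(tendsto_expansionValue h1 ha hax).eventually_lt_const hlt] with n hn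
    exact ((hanti n).lt_iff_gt h1 (hb n)).1 (hn.trans_eq (hba n).symm)

/-! ### Values of blocks -/

/-- The value `∑_{i=1}^k w_i β^{-i}` of a block `w = w_1 … w_k` in base `β`, in Horner form. -/
def blockValue (β : ℝ) : List ℕ → ℝ
  | [] => 0
  | d :: w => (d + blockValue β w) / β

theorem blockValue_nonneg {β : ℝ} (hβ : 0 ≤ β) (w : List ℕ) : 0 ≤ blockValue β w := by
  induction w with
  | nil => exact le_rfl
  | cons d w ih => rw [blockValue]; positivity

theorem blockValue_append (β : ℝ) (u v : List ℕ) :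
    blockValue β (u ++ v) = blockValue β u + blockValue β v / β ^ u.length := by
  induction u with
  | nil => simp [blockValue]
  | cons d u ih =>
    rw [List.cons_append, blockValue, blockValue, ih, List.length_cons, pow_succ, ← div_div,
      ← add_assoc, add_div]

theorem plusBlock_append (u : List ℕ) {v : List ℕ} (hv : v ≠ []) :
    plusBlock (u ++ v) = u ++ plusBlock v := by
  rw [plusBlock, List.dropLast_append_of_ne_nil hv, List.append_assoc, plusBlock]

theorem length_plusBlock {w : List ℕ} (hw : w ≠ []) : (plusBlock w).length = w.length := by
  have := List.length_pos_iff.2 hw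
  rw [plusBlock, List.length_append, List.length_dropLast, List.length_singleton]
  omega

theorem blockValue_plusBlock (β : ℝ) {w : List ℕ} (hw : [0] <:+ w) :
    blockValue β (plusBlock w) = blockValue β w + (β ^ w.length)⁻¹ := by
  obtain ⟨s, rfl⟩ := hw
  simp [plusBlock, blockValue_append, blockValue, pow_succ', div_eq_inv_mul, mul_comm]

theorem prefixPeriodic_le {D : ℕ} {u w : List ℕ} (hu : ∀ d ∈ u, d ≤ D) (hw : ∀ d ∈ w, d ≤ D)
    (i : ℕ) : prefixPeriodic u w i ≤ D := by
  have hgetD : ∀ v : List ℕ, (∀ d ∈ v, d ≤ D) → ∀ j, v.getD j 0 ≤ D := by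
    intro v hv j
    rcases lt_or_ge j v.length with hj | hj
    · rw [List.getD_eq_getElem v 0 hj]
      exact hv _ (List.getElem_mem hj)
    · rw [List.getD_eq_default v 0 hj]
      exact D.zero_le
  rw [prefixPeriodic]
  split_ifs
  exacts [hgetD u hu i, hgetD w hw _]

theorem bddAbove_range_prefixPeriodic (u w : List ℕ) : BddAbove (range (prefixPeriodic u w)) := by
  have hsum : ∀ d ∈ u ++ w, d ≤ (u ++ w).sum := fun d hd => List.le_sum_of_mem hd
  exact ⟨(u ++ w).sum, forall_mem_range.2 <| prefixPeriodic_le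
    (fun d hd => hsum d (List.mem_append_left w hd))
    fun d hd => hsum d (List.mem_append_right u hd)⟩

theorem prefixPeriodic_nil (w : List ℕ) : prefixPeriodic [] w = periodicSeq w := rfl

theorem prefixPeriodic_self (w : List ℕ) : prefixPeriodic w w = periodicSeq w := by
  funext i
  rw [prefixPeriodic, periodicSeq]
  split_ifs with hi
  · rw [Nat.mod_eq_of_lt hi]
  · rw [Nat.mod_eq_sub_mod (not_lt.1 hi)]

theorem prefixPeriodic_cons_succ (d : ℕ) (u w : List ℕ) (i : ℕ) :
    prefixPeriodic (d :: u) w (i + 1) = prefixPeriodic u w i := by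
  simp [prefixPeriodic]

section
variable {β : ℝ} (hβ : 1 < β)
include hβ

theorem expansionValue_prefixPeriodic (u w : List ℕ) :
    expansionValue β (prefixPeriodic u w) =
      blockValue β u + expansionValue β (periodicSeq w) / β ^ u.length := by
  induction u with
  | nil => simp [prefixPeriodic_nil, blockValue]
  | cons d u ih =>
    rw [expansionValue_eq_head_add_tail hβ (bddAbove_range_prefixPeriodic _ _)]
    simp only [prefixPeriodic_cons_succ, ih, blockValue, List.length_cons, pow_succ]
    simp [prefixPeriodic, add_div, div_div, add_assoc]

theorem expansionValue_periodicSeq (w : List ℕ) :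
    expansionValue β (periodicSeq w) =
      blockValue β w + expansionValue β (periodicSeq w) / β ^ w.length := by
  rw [← expansionValue_prefixPeriodic hβ, prefixPeriodic_self]

theorem blockValue_le_expansionValue_prefixPeriodic {s u : List ℕ} (hsu : s <+: u)
    (w : List ℕ) : blockValue β s ≤ expansionValue β (prefixPeriodic u w) := by
  obtain ⟨v, rfl⟩ := hsu
  have hβ0 : 0 ≤ β := by linarith
  have hv := blockValue_nonneg hβ0 v
  have hw := expansionValue_nonneg hβ0 (periodicSeq w)
  rw [expansionValue_prefixPeriodic hβ, blockValue_append, add_assoc]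
  exact le_add_of_nonneg_right (by positivity)

theorem expansionValue_prefixPeriodic_lt {u v : List ℕ} (hlen : u.length = v.length)
    (hv : [0] <:+ v) (hu : blockValue β u ≤ 1) :
    expansionValue β (prefixPeriodic (u ++ plusBlock v) (v ++ u)) <
      expansionValue β (prefixPeriodic u (plusBlock v)) := by
  have hβ0 : 0 < β := by linarith
  have hv0 : v ≠ [] := List.ne_nil_of_mem (hv.subset (List.mem_singleton_self 0))
  have hV := blockValue_nonneg hβ0.le v
  obtain ⟨q, hq⟩ : ∃ q, q = (β ^ v.length)⁻¹ := ⟨_, rfl⟩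
  have hq0 : 0 < q := by rw [hq]; positivity
  have hq1 : q < 1 := by
    rw [hq]
    exact inv_lt_one_of_one_lt₀ (one_lt_pow₀ hβ (by simpa using hv0))
  have hP := expansionValue_periodicSeq hβ (plusBlock v)
  have hQ := expansionValue_periodicSeq hβ (v ++ u)
  rw [expansionValue_prefixPeriodic hβ, expansionValue_prefixPeriodic hβ]
  simp only [blockValue_append, blockValue_plusBlock β hv, List.length_append,
    length_plusBlock hv0, hlen, pow_add, div_eq_mul_inv, mul_inv, ← hq] at hP hQ ⊢
  set P := expansionValue β (periodicSeq (plusBlock v))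
  set Q := expansionValue β (periodicSeq (v ++ u))
  have hdiff : (1 - q ^ 2) * (P - Q) = q * (1 - blockValue β u + (blockValue β v + q)) := by
    linear_combination (1 + q) * hP - hQ
  have hQP : Q < P := by
    have hpos : 0 < (1 - q ^ 2) * (P - Q) := hdiff ▸ mul_pos hq0 (by linarith)
    exact sub_pos.1 (pos_of_mul_pos_right hpos (by nlinarith))
  calc blockValue β u + (blockValue β v + q) * q + Q * (q * q)
      < blockValue β u + (blockValue β v + q) * q + P * (q * q) := by gcongr
    _ = blockValue β u + P * q := by linear_combination -q * hP

end

/-! ### The blocks `t_n` -/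

theorem thetaBlock_append {u : List ℕ} (hu : 3 ∣ u.length) (v : List ℕ) :
    thetaBlock (u ++ v) = thetaBlock u ++ thetaBlock v := by
  obtain ⟨k, hk⟩ := hu
  simp only [thetaBlock, List.mapIdx_append, hk, Nat.add_mul_mod_self_left]

theorem length_thetaBlock (w : List ℕ) : (thetaBlock w).length = w.length :=
  List.length_mapIdx

theorem thetaBlock_le_one {w : List ℕ} (hw : ∀ d ∈ w, d ≤ 1) : ∀ d ∈ thetaBlock w, d ≤ 1 := by
  intro d hd
  obtain ⟨i, hi, rfl⟩ := List.mem_mapIdx.1 hd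
  have := hw _ (List.getElem_mem hi)
  split_ifs <;> omega

theorem thetaBlock_thetaBlock {w : List ℕ} (hw : ∀ d ∈ w, d ≤ 1) :
    thetaBlock (thetaBlock w) = w := by
  refine List.ext_getElem (by simp only [length_thetaBlock]) fun i _ hi => ?_
  have := hw _ (List.getElem_mem hi)
  simp only [thetaBlock, List.getElem_mapIdx]
  split_ifs <;> omega

theorem thetaBlock_concat {w : List ℕ} {d : ℕ} (hw : 3 ∣ (w ++ [d]).length) :
    thetaBlock (w ++ [d]) = thetaBlock w ++ [1 - d] := by
  rw [List.length_append, List.length_singleton] at hw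
  rw [thetaBlock, List.mapIdx_concat, if_neg (by omega), thetaBlock]

theorem plusBlock_le_one {w : List ℕ} (hw : ∀ d ∈ w, d ≤ 1) : ∀ d ∈ plusBlock w, d ≤ 1 := by
  intro d hd
  rcases List.mem_append.1 hd with hd | hd
  · exact hw d (List.mem_of_mem_dropLast hd)
  · exact (List.mem_singleton.1 hd).le

theorem zero_suffix_thetaBlock_plusBlock {w : List ℕ} (hw0 : w ≠ []) (hw : 3 ∣ w.length) :
    [0] <:+ thetaBlock (plusBlock w) := by
  rw [← length_plusBlock hw0] at hw
  rw [plusBlock, thetaBlock_concat hw]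
  exact List.suffix_append _ _

theorem plusBlock_thetaBlock_plusBlock {w : List ℕ} (hw : 3 ∣ w.length) (h0 : [0] <:+ w) :
    plusBlock (thetaBlock (plusBlock w)) = thetaBlock w := by
  obtain ⟨s, rfl⟩ := h0
  rw [List.length_append, List.length_singleton] at hw
  have hplus : plusBlock (s ++ [0]) = s ++ [1] := by simp [plusBlock]
  rw [hplus, thetaBlock_concat (by simpa using hw), thetaBlock_concat (by simpa using hw)]
  simp [plusBlock]

theorem length_tB (n : ℕ) : (tB n).length = 3 * 2 ^ n := by
  induction n with
  | zero => rfl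
  | succ n ih =>
    have hne : tB n ≠ [] := List.ne_nil_of_length_pos (by rw [ih]; positivity)
    rw [tB, List.length_append, length_thetaBlock, length_plusBlock hne, ih]
    ring

theorem tB_ne_nil (n : ℕ) : tB n ≠ [] :=
  List.ne_nil_of_length_pos (by rw [length_tB]; positivity)

theorem three_dvd_length_tB (n : ℕ) : 3 ∣ (tB n).length := ⟨2 ^ n, length_tB n⟩

theorem tB_le_one (n : ℕ) : ∀ d ∈ tB n, d ≤ 1 := by
  induction n with
  | zero => simp [tB]
  | succ n ih =>
    intro d hd
    rcases List.mem_append.1 hd with hd | hd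
    · exact plusBlock_le_one ih d hd
    · exact thetaBlock_le_one (plusBlock_le_one ih) d hd

theorem zero_suffix_tB : ∀ n, [0] <:+ tB n
  | 0 => List.suffix_append [1, 0] [0]
  | n + 1 => (zero_suffix_thetaBlock_plusBlock (tB_ne_nil n) (three_dvd_length_tB n)).trans
      (List.suffix_append _ _)

theorem plusBlock_tB_succ (n : ℕ) :
    plusBlock (tB (n + 1)) = plusBlock (tB n) ++ thetaBlock (tB n) := by
  have hne : thetaBlock (plusBlock (tB n)) ≠ [] := by simp [thetaBlock, plusBlock]
  rw [tB, plusBlock_append _ hne,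
    plusBlock_thetaBlock_plusBlock (three_dvd_length_tB n) (zero_suffix_tB n)]

theorem thetaBlock_tB_succ (n : ℕ) :
    thetaBlock (tB (n + 1)) = thetaBlock (plusBlock (tB n)) ++ plusBlock (tB n) := by
  have hdvd : 3 ∣ (plusBlock (tB n)).length := by
    rw [length_plusBlock (tB_ne_nil n)]
    exact three_dvd_length_tB n
  rw [tB, thetaBlock_append hdvd, thetaBlock_thetaBlock (plusBlock_le_one (tB_le_one n))]

theorem plusBlock_tB_prefix {m n : ℕ} (hmn : m ≤ n) : plusBlock (tB m) <+: plusBlock (tB n) := by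
  induction n, hmn using Nat.le_induction with
  | base => exact List.prefix_rfl
  | succ n _ ih =>
    rw [plusBlock_tB_succ]
    exact ih.trans (List.prefix_append _ _)

theorem lt_length_plusBlock_tB (n : ℕ) : n < (plusBlock (tB n)).length := by
  rw [length_plusBlock (tB_ne_nil n), length_tB]
  have : n < 2 ^ n := Nat.lt_two_pow_self
  omega

/-! ### The expansions for `β̂_n` -/

theorem hatSeq_le_one (n i : ℕ) : hatSeq n i ≤ 1 :=
  prefixPeriodic_le (plusBlock_le_one (tB_le_one _)) (thetaBlock_le_one (tB_le_one _)) i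

theorem hatSeq_eq_lamSeq {n i : ℕ} (hi : i ≤ n + 1) : hatSeq n i = lamSeq i := by
  have hlt := lt_length_plusBlock_tB i
  have hprefix := plusBlock_tB_prefix hi
  have hhat : hatSeq n i = (plusBlock (tB (n + 1))).getD i 0 :=
    if_pos (hlt.trans_le hprefix.length_le)
  have hlam : lamSeq i = (plusBlock (tB i)).getD i 0 := List.getD_append _ _ _ _ hlt
  rw [hhat, hlam, List.getD_eq_getElem _ _ hlt, hprefix.getElem hlt, List.getD_eq_getElem]

theorem tendsto_hatSeq : Tendsto hatSeq atTop (nhds lamSeq) :=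
  tendsto_pi_nhds.2 fun i => tendsto_nhds_of_eventually_eq <| by
    filter_upwards [eventually_ge_atTop i] with n hn
    exact hatSeq_eq_lamSeq (by omega)

theorem hatSeq_succ (n : ℕ) :
    hatSeq (n + 1) = prefixPeriodic (plusBlock (tB (n + 1)) ++ thetaBlock (tB (n + 1)))
      (thetaBlock (plusBlock (tB (n + 1))) ++ plusBlock (tB (n + 1))) := by
  rw [hatSeq, plusBlock_tB_succ (n + 1), thetaBlock_tB_succ (n + 1)]

theorem expansionValue_hatSeq_succ_lt {β : ℝ} (hβ : 1 < β) {n : ℕ}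
    (h : expansionValue β (hatSeq (n + 1)) ≤ 1) :
    expansionValue β (hatSeq (n + 1)) < expansionValue β (hatSeq n) := by
  have hT := three_dvd_length_tB (n + 1)
  rw [hatSeq_succ] at h ⊢
  have hprefix : blockValue β (plusBlock (tB (n + 1))) ≤ 1 :=
    (blockValue_le_expansionValue_prefixPeriodic hβ (List.prefix_append _ _) _).trans h
  have hlt := expansionValue_prefixPeriodic_lt hβ (length_thetaBlock _).symm
    (zero_suffix_thetaBlock_plusBlock (tB_ne_nil (n + 1)) hT) hprefix
  rwa [plusBlock_thetaBlock_plusBlock hT (zero_suffix_tB (n + 1))] at hlt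

theorem stmt8_general (bhat : ℕ → ℝ) (hbhat : ∀ n, 1 < bhat n ∧ SumsToOne (bhat n) (hatSeq n))
    (bc : ℝ) (hbc : 1 < bc ∧ SumsToOne bc lamSeq) :
    StrictAnti bhat ∧ Tendsto bhat atTop (nhds bc) := by
  refine ⟨strictAnti_nat_of_succ_lt fun n => ?_, tendsto_base_of_sumsToOne hatSeq_le_one
    tendsto_hatSeq (fun n => (hbhat n).1) (fun n => (hbhat n).2) hbc.1 hbc.2⟩
  have hvalue : expansionValue (bhat n) (hatSeq n) < expansionValue (bhat (n + 1)) (hatSeq n) :=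
    calc expansionValue (bhat n) (hatSeq n) = 1 := (hbhat n).2
      _ = expansionValue (bhat (n + 1)) (hatSeq (n + 1)) := (hbhat (n + 1)).2.symm
      _ < expansionValue (bhat (n + 1)) (hatSeq n) :=
        expansionValue_hatSeq_succ_lt (hbhat (n + 1)).1 (hbhat (n + 1)).2.le
  exact ((expansionValue_strictAntiOn (bddAbove_range_prefixPeriodic _ _)
    (hbhat n).2.ne_zero).lt_iff_gt (hbhat n).1 (hbhat (n + 1)).1).1 hvalue

/-- The sequence n ↦ β̂_n is strictly decreasing and converges to β_c. -/
theorem stmt8 (bhat : ℕ → ℝ)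
    (hbhat : ∀ n, bhat n ∈ Set.Ioc (1 : ℝ) 2 ∧
      FatSierpinski.IsQuasiGreedy (bhat n) (FatSierpinski.hatSeq n))
    (bc : ℝ) (hbc : FatSierpinski.IsBetaC bc) :
    StrictAnti bhat ∧ Filter.Tendsto bhat Filter.atTop (nhds bc) :=
  stmt8_general bhat (fun n => ⟨(hbhat n).1.1, (hbhat n).2.2.2.1⟩) bc ⟨hbc.1.1, hbc.2⟩

end FatSierpinski
end
end
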